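/- Let A = (L_1,L_2,L_3,L_4) encode a (4,1) valise adinkra and set X_A := Σ_{I<J} L_Iᵀ·L_J (sum over the six pairs I < J in {1,2,3,4}). Then trace(X_A·X_A) = trace((L_1ᵀ·L_2 + L_3ᵀ·L_4)²) + trace((L_1ᵀ·L_3 + L_2ᵀ·L_4)²) + trace((L_1ᵀ·L_4 + L_2ᵀ·L_3)²). -/

import Mathlib

open Matrix

/-- A signed permutation matrix: exactly one nonzero entry in each row and column,
that entry being `1` or `-1`. -/
def IsSignedPerm {n : ℕ} (M : Matrix (Fin n) (Fin n) ℤ) : Prop :=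
  (∀ i j, M i j = 0 ∨ M i j = 1 ∨ M i j = -1) ∧
  (∀ i, ∃! j, M i j ≠ 0) ∧
  (∀ j, ∃! i, M i j ≠ 0)

/-- The garden algebra relations for a family of `d × d` integer matrices. -/
def GardenRel {d N : ℕ} (L : Fin N → Matrix (Fin d) (Fin d) ℤ) : Prop :=
  ∀ I J : Fin N,
    (L I * (L J)ᵀ + L J * (L I)ᵀ =
      if I = J then (2 : ℤ) • (1 : Matrix (Fin d) (Fin d) ℤ) else 0) ∧
    ((L I)ᵀ * L J + (L J)ᵀ * L I =
      if I = J then (2 : ℤ) • (1 : Matrix (Fin d) (Fin d) ℤ) else 0)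

/-- The L-matrices of a (4,1) valise adinkra: a quadruple of 4×4 integer signed
permutation matrices satisfying the garden algebra relations. -/
def IsAdinkra (L : Fin 4 → Matrix (Fin 4) (Fin 4) ℤ) : Prop :=
  (∀ I, IsSignedPerm (L I)) ∧ GardenRel L

namespace GardenRel

variable {d N : ℕ} {L : Fin N → Matrix (Fin d) (Fin d) ℤ}

theorem mul_transpose_self (h : GardenRel L) (I : Fin N) : L I * (L I)ᵀ = 1 := by
  have h₁ := (h I I).1
  rw [if_pos rfl, ← two_zsmul] at h₁
  exact smul_right_injective _ (two_ne_zero (α := ℤ)) h₁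

theorem transpose_mul_eq_neg (h : GardenRel L) {I J : Fin N} (hIJ : I ≠ J) :
    (L I)ᵀ * L J = -((L J)ᵀ * L I) := by
  have h₁ := (h I J).2
  rw [if_neg hIJ] at h₁
  exact eq_neg_of_add_eq_zero_left h₁

theorem trace_transpose_mul (h : GardenRel L) {I J : Fin N} (hIJ : I ≠ J) :
    trace ((L I)ᵀ * L J) = 0 := by
  have h₁ := congrArg trace (h.transpose_mul_eq_neg hIJ)
  rw [trace_neg, ← trace_transpose ((L J)ᵀ * L I), transpose_mul, transpose_transpose] at h₁
  linarith

/-- Consecutive bilinears telescope through the shared index, so their product is traceless. -/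
theorem trace_mul_of_inner (h : GardenRel L) {I J K : Fin N} (hIK : I ≠ K) :
    trace ((L I)ᵀ * L J * ((L J)ᵀ * L K)) = 0 := by
  rw [Matrix.mul_assoc, ← Matrix.mul_assoc (L J), h.mul_transpose_self, Matrix.one_mul,
    h.trace_transpose_mul hIK]

theorem trace_mul_of_outer (h : GardenRel L) {I J K : Fin N} (hIK : I ≠ K) :
    trace ((L J)ᵀ * L K * ((L I)ᵀ * L J)) = 0 := by
  rw [trace_mul_comm, h.trace_mul_of_inner hIK]

theorem trace_mul_of_left (h : GardenRel L) {I J K : Fin N} (hJI : J ≠ I) (hIK : I ≠ K) :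
    trace ((L J)ᵀ * L I * ((L J)ᵀ * L K)) = 0 := by
  rw [h.transpose_mul_eq_neg hJI, Matrix.neg_mul, trace_neg, h.trace_mul_of_inner hIK, neg_zero]

theorem trace_mul_of_right (h : GardenRel L) {I J K : Fin N} (hKJ : K ≠ J) (hIK : I ≠ K) :
    trace ((L I)ᵀ * L J * ((L K)ᵀ * L J)) = 0 := by
  rw [h.transpose_mul_eq_neg hKJ, Matrix.mul_neg, trace_neg, h.trace_mul_of_inner hIK, neg_zero]

end GardenRel

theorem stmt16 (L : Fin 4 → Matrix (Fin 4) (Fin 4) ℤ) (hL : IsAdinkra L)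
    (X : Matrix (Fin 4) (Fin 4) ℤ)
    (hX : X = ∑ I : Fin 4, ∑ J : Fin 4, if I < J then (L I)ᵀ * L J else 0) :
    Matrix.trace (X * X) =
      Matrix.trace (((L 0)ᵀ * L 1 + (L 2)ᵀ * L 3) ^ 2) +
      Matrix.trace (((L 0)ᵀ * L 2 + (L 1)ᵀ * L 3) ^ 2) +
      Matrix.trace (((L 0)ᵀ * L 3 + (L 1)ᵀ * L 2) ^ 2) := by
  have h := hL.2
  have hX' : X = ((L 0)ᵀ * L 1 + (L 2)ᵀ * L 3) + ((L 0)ᵀ * L 2 + (L 1)ᵀ * L 3) +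
      ((L 0)ᵀ * L 3 + (L 1)ᵀ * L 2) := by
    rw [hX]
    simp [Fin.sum_univ_four]
    abel
  rw [hX']
  simp only [sq, Matrix.add_mul, Matrix.mul_add, trace_add]
  simp (disch := decide) only [h.trace_mul_of_inner, h.trace_mul_of_outer,
    h.trace_mul_of_left, h.trace_mul_of_right]
  ring
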